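/- arXiv:2505.15826 — 3 statements merged into one kernel-verified Lean document; each statement's English description precedes it below -/
import Mathlib

section
/- (Pollak) For every integer n ≥ 1, the map from PF_n to (Z_{n+1})^(n−1) sending (x_1,…,x_n) to (x_2 − x_1 mod (n+1), x_3 − x_2 mod (n+1), …, x_n − x_{n−1} mod (n+1)) is a bijection. -/
/-- A sequence `x : Fin n → Fin n` (so with values in `{0,…,n-1}`) is a *parking function*
of length `n` if its weakly increasing rearrangement `z = x ∘ σ` satisfies `z i ≤ i`
(0-indexed; equivalently `z_i ≤ i - 1` in 1-indexed notation). -/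
def IsParkingFunction {n : ℕ} (x : Fin n → Fin n) : Prop :=
  ∃ σ : Equiv.Perm (Fin n), Monotone (x ∘ σ) ∧ ∀ i : Fin n, (x (σ i) : ℕ) ≤ (i : ℕ)

/-!
The fibres of the difference map on `(ℤ/(n+1))ⁿ` are the cosets of the diagonal, so the claim is
that every coset `{y - c}` contains exactly one parking function. Let `S c` be the sum of the
representatives in `{0, …, n}` of the entries of `y - c`. Raising `c` by `k ≤ n` lowers each
representative by `k`, except that the representatives smaller than `k` wrap around and gain
`n + 1`; hence `S (c + k) = S c + (n + 1) * m - n * k`, where `m` is the number of representatives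
of `y - c` smaller than `k`. Consequently `S c ≤ S (c + k)` exactly when `k ≤ m`, and `y - c` is a
parking function exactly when `c` minimises `S`. Since `S c ≡ ∑ yᵢ - n c ≡ ∑ yᵢ + c` modulo
`n + 1`, the function `S` is injective, and its minimiser is unique.
-/

section

open Finset

variable {ι : Type*} [Fintype ι]

/-- The order-free form of the parking condition: for each `k` up to the number of cars, at least
`k` cars prefer one of the first `k` spots. Values are natural numbers so that it applies both to
entries in `Fin n` and to representatives of residues modulo `n + 1`. -/
def HasParkingCounts (z : ι → ℕ) : Prop :=
  ∀ k ≤ Fintype.card ι, k ≤ #{i | z i < k}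

theorem HasParkingCounts.lt_card {z : ι → ℕ} (hz : HasParkingCounts z) (i : ι) :
    z i < Fintype.card ι := by
  have hcard : #{j | z j < Fintype.card ι} = Fintype.card ι :=
    le_antisymm (card_le_univ _) (hz _ le_rfl)
  simpa using (card_filter_eq_iff.mp hcard) i (mem_univ i)

theorem hasParkingCounts_comp_equiv {κ : Type*} [Fintype κ] (z : ι → ℕ) (e : κ ≃ ι) :
    HasParkingCounts (z ∘ e) ↔ HasParkingCounts z := by
  have hcount (k : ℕ) : #{j | z (e j) < k} = #{i | z i < k} :=
    card_equiv e (by simp)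
  simp only [HasParkingCounts, Function.comp_apply, hcount, Fintype.card_congr e]

theorem hasParkingCounts_of_le_val {n : ℕ} {z : Fin n → ℕ} (hz : ∀ i, z i ≤ i) :
    HasParkingCounts z := by
  intro k hk
  rw [Fintype.card_fin] at hk
  calc
    k = #{i : Fin n | (i : ℕ) < k} := by rw [Fin.card_filter_val_lt, min_eq_right hk]
    _ ≤ #{i | z i < k} := card_le_card <|
      monotone_filter_right _ fun i _ hi => (hz i).trans_lt hi

theorem HasParkingCounts.le_val_of_monotone {n : ℕ} {z : Fin n → ℕ} (hz : HasParkingCounts z)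
    (hmono : Monotone z) (i : Fin n) : z i ≤ i := by
  by_contra! hi
  have hsub : ({j | z j < i + 1} : Finset (Fin n)) ⊆ Iio i := fun j hj => by
    rw [mem_filter_univ] at hj
    exact mem_Iio.mpr (hmono.reflect_lt (by omega))
  have hle : (i : ℕ) + 1 ≤ #(Iio i) :=
    (hz (i + 1) (by simp)).trans (card_le_card hsub)
  rw [Fin.card_Iio] at hle
  omega

theorem isParkingFunction_iff_hasParkingCounts {n : ℕ} (x : Fin n → Fin n) :
    IsParkingFunction x ↔ HasParkingCounts fun i => (x i : ℕ) := by
  constructor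
  · rintro ⟨σ, -, hle⟩
    exact (hasParkingCounts_comp_equiv _ σ).mp (hasParkingCounts_of_le_val hle)
  · intro hx
    refine ⟨Tuple.sort x, Tuple.monotone_sort x, ?_⟩
    exact ((hasParkingCounts_comp_equiv _ (Tuple.sort x)).mpr hx).le_val_of_monotone
      (Tuple.monotone_sort x)

theorem mul_le_succ_mul_iff_of_le {n k m : ℕ} (hk : k ≤ n) : n * k ≤ (n + 1) * m ↔ k ≤ m := by
  refine ⟨fun h => ?_, fun h => Nat.mul_le_mul n.le_succ h⟩
  by_contra! hmk
  have hgap : (n + 1) * (m + 1) ≤ (n + 1) * k := Nat.mul_le_mul_left _ hmk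
  linarith

variable {N : ℕ}

/-- The sum of the representatives in `{0, …, N - 1}` of the entries of `y - c`; the parking
functions in the diagonal coset of `y` are found by minimising it over `c`. -/
def residueSum (y : ι → ZMod N) (c : ZMod N) : ℕ :=
  ∑ i, (y i - c).val

variable [NeZero N]

theorem val_sub_natCast_add (a : ZMod N) {k : ℕ} (hk : k ≤ N) :
    (a - k).val + k = a.val + if a.val < k then N else 0 := by
  have ha := a.val_lt
  have hcast : a - k = ((a.val + (if a.val < k then N else 0) - k : ℕ) : ZMod N) := by
    rw [Nat.cast_sub (by split_ifs <;> omega)]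
    split_ifs <;> simp
  rw [hcast, ZMod.val_natCast_of_lt (by split_ifs <;> omega)]
  split_ifs <;> omega

theorem residueSum_add_natCast (y : ι → ZMod N) (c : ZMod N) {k : ℕ} (hk : k ≤ N) :
    residueSum y (c + k) + Fintype.card ι * k =
      residueSum y c + N * #{i | (y i - c).val < k} :=
  calc
    residueSum y (c + k) + Fintype.card ι * k = ∑ i, ((y i - c - k).val + k) := by
      simp [residueSum, sum_add_distrib, sub_sub]
    _ = ∑ i, ((y i - c).val + if (y i - c).val < k then N else 0) :=
      sum_congr rfl fun i _ => val_sub_natCast_add (y i - c) hk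
    _ = residueSum y c + N * #{i | (y i - c).val < k} := by
      rw [sum_add_distrib, ← sum_filter, sum_const, smul_eq_mul, mul_comm, residueSum]

theorem residueSum_injective (hN : N = Fintype.card ι + 1) (y : ι → ZMod N) :
    Function.Injective (residueSum y) := by
  have hcard : (Fintype.card ι : ZMod N) = -1 := by
    rw [eq_neg_iff_add_eq_zero, ← Nat.cast_add_one, ← hN, ZMod.natCast_self]
  have hcast (c : ZMod N) : (residueSum y c : ZMod N) = ∑ i, y i + c := by
    simp [residueSum, hcard]
  intro c d hcd
  have hsum := congrArg (Nat.cast : ℕ → ZMod N) hcd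
  rwa [hcast, hcast, add_right_inj] at hsum

theorem residueSum_le_add_natCast_iff (hN : N = Fintype.card ι + 1) (y : ι → ZMod N)
    (c : ZMod N) {k : ℕ} (hk : k ≤ Fintype.card ι) :
    residueSum y c ≤ residueSum y (c + k) ↔ k ≤ #{i | (y i - c).val < k} := by
  have hshift := residueSum_add_natCast y c (k := k) (by omega)
  rw [← mul_le_succ_mul_iff_of_le hk, ← hN]
  omega

theorem hasParkingCounts_val_sub_iff (hN : N = Fintype.card ι + 1) (y : ι → ZMod N)
    (c : ZMod N) :
    HasParkingCounts (fun i => (y i - c).val) ↔ ∀ d, residueSum y c ≤ residueSum y d := by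
  constructor
  · intro hc d
    have hd : (d - c).val ≤ Fintype.card ι := by
      have := (d - c).val_lt
      omega
    simpa using (residueSum_le_add_natCast_iff hN y c hd).mpr (hc _ hd)
  · exact fun hmin k hk => (residueSum_le_add_natCast_iff hN y c hk).mp (hmin _)

theorem existsUnique_hasParkingCounts_val_sub (hN : N = Fintype.card ι + 1) (y : ι → ZMod N) :
    ∃! c, HasParkingCounts fun i => (y i - c).val := by
  simp only [hasParkingCounts_val_sub_iff hN]
  obtain ⟨c, hc⟩ := Finite.exists_min (residueSum y)
  exact ⟨c, hc, fun d hd => residueSum_injective hN y (le_antisymm (hd c) (hc d))⟩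

end

theorem val_natCast_fin {n : ℕ} (a : Fin n) : ((a : ℕ) : ZMod (n + 1)).val = a :=
  ZMod.val_natCast_of_lt (by omega)

theorem existsUnique_isParkingFunction_sub_const {n : ℕ} (y : Fin n → ZMod (n + 1)) :
    ∃! x : {x : Fin n → Fin n // IsParkingFunction x},
      ∃ c, ∀ i, ((x.1 i : ℕ) : ZMod (n + 1)) = y i - c := by
  obtain ⟨c, hc, hunique⟩ := existsUnique_hasParkingCounts_val_sub (by simp) y
  have hlt (i : Fin n) : (y i - c).val < n := by simpa using hc.lt_card i
  refine ⟨⟨fun i => ⟨(y i - c).val, hlt i⟩, (isParkingFunction_iff_hasParkingCounts _).mpr hc⟩,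
    ⟨c, by simp⟩, ?_⟩
  rintro ⟨x, hx⟩ ⟨d, hd⟩
  have hval (i : Fin n) : (y i - d).val = x i := by rw [← hd, val_natCast_fin]
  obtain rfl : d = c := hunique d <| by
    simpa only [hval] using (isParkingFunction_iff_hasParkingCounts x).mp hx
  ext i
  exact (hval i).symm

theorem forall_succ_sub_castSucc_eq_iff {G : Type*} [AddCommGroup G] {m : ℕ}
    (z : Fin (m + 1) → G) (d : Fin m → G) :
    (∀ i : Fin m, z i.succ - z i.castSucc = d i) ↔ ∃ c, ∀ i, z i = Fin.partialSum d i - c := by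
  constructor
  · refine fun hz => ⟨-z 0, fun i => ?_⟩
    induction i using Fin.induction with
    | zero => simp
    | succ i ih => rw [Fin.partialSum_succ, ← hz i, ← sub_eq_zero, ih]; abel
  · rintro ⟨c, hc⟩ i
    rw [hc, hc, Fin.partialSum_succ]
    abel

/-- (Pollak) For every `n ≥ 1`, the map `PF_n → (ℤ/(n+1))^(n-1)` sending
`(x_1,…,x_n)` to `(x_2 - x_1, …, x_n - x_{n-1})` (differences mod `n+1`) is a bijection. -/
theorem pollak_bijection (n : ℕ) (hn : 1 ≤ n) :
    Function.Bijective
      (fun x : {x : Fin n → Fin n // IsParkingFunction x} =>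
        fun i : Fin (n - 1) =>
          (((x.1 ⟨(i : ℕ) + 1, by have := i.isLt; omega⟩ : Fin n) : ℕ) : ZMod (n + 1)) -
            (((x.1 ⟨(i : ℕ), by have := i.isLt; omega⟩ : Fin n) : ℕ) : ZMod (n + 1))) := by
  obtain ⟨m, rfl⟩ := Nat.exists_eq_add_of_le' hn
  refine (Function.bijective_iff_existsUnique _).mpr fun (d : Fin m → ZMod (m + 1 + 1)) => ?_
  refine (existsUnique_congr fun x => ?_).mpr
    (existsUnique_isParkingFunction_sub_const (Fin.partialSum d))
  let z : Fin (m + 1) → ZMod (m + 1 + 1) := fun i => ((x.1 i : ℕ) : ZMod (m + 1 + 1))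
  exact funext_iff.trans (forall_succ_sub_castSucc_eq_iff z d)
end

section
/- Let n ≥ 1 and let π be a permutation of {1,…,n} whose cycle type has l cycles (fixed points counted as cycles). Then the number of parking functions (x_1,…,x_n) of length n that are fixed by π acting by permutation of coordinates (i.e., x_{π(i)} = x_i for all i, equivalently x is constant on each cycle of π) equals (n+1)^(l−1). -/
/-!
This is Pollak's circle argument, made equivariant. Relax the values of a sequence to
`ZMod (n + 1)`, where they can be rotated by adding a constant. The cycle lemma shows that exactly
one of the `n + 1` rotations of any sequence `f : Fin n → ZMod (n + 1)` is a parking function.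
Rotation preserves the property of being constant on the cycles of `π`, and there are `(n + 1) ^ l`
sequences with this property, so one in every `n + 1` of them is parking.
-/

section CycleLemma

variable {N : ℕ} [NeZero N] {S : ℕ → ℤ}

-- The tilt `m ↦ N * S m + m` cancels the drift of `S`, so it descends to `ZMod N`. Being congruent
-- to `m` modulo `N`, it separates residues, which is why its minimizer is unique.
lemma forall_le_add_iff_forall_tilt_le (hS : ∀ m, S (m + N) = S m - 1) (c : ZMod N) :
    (∀ k < N, S c.val ≤ S (c.val + k)) ↔
      ∀ b : ZMod N, N * S c.val + c.val ≤ N * S b.val + b.val := by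
  have tilt_periodic : Function.Periodic (fun m : ℕ => N * S m + m) N := fun m => by
    simp only [hS]
    push_cast
    ring
  have tilt_val_add (k : ℕ) :
      N * S (c + k).val + (c + k).val = N * S (c.val + k) + (c.val + k) := by
    have h := tilt_periodic.map_mod_nat (c.val + k)
    rwa [← ZMod.val_natCast, Nat.cast_add, ZMod.natCast_zmod_val, Nat.cast_add] at h
  constructor
  · intro h b
    have hb := tilt_val_add (b - c).val
    rw [ZMod.natCast_zmod_val, add_sub_cancel] at hb
    rw [hb]
    have := mul_le_mul_of_nonneg_left (h _ (b - c).val_lt) (Nat.cast_nonneg (α := ℤ) N)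
    omega
  · intro h k hk
    have hck := h (c + k)
    rw [tilt_val_add] at hck
    have : (N : ℤ) * S c.val < N * (S (c.val + k) + 1) := by
      rw [mul_add]
      omega
    exact Int.lt_add_one_iff.1 (lt_of_mul_lt_mul_left this (Nat.cast_nonneg N))

lemma existsUnique_forall_le_add (hS : ∀ m, S (m + N) = S m - 1) :
    ∃! c : ZMod N, ∀ k < N, S c.val ≤ S (c.val + k) := by
  simp only [forall_le_add_iff_forall_tilt_le hS]
  have tilt_injective : Function.Injective fun b : ZMod N => N * S b.val + b.val := fun a b h => by
    simpa using congrArg (Int.cast : ℤ → ZMod N) h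
  obtain ⟨c, hc⟩ := Finite.exists_min fun b : ZMod N => N * S b.val + b.val
  exact ⟨c, hc, fun b hb => tilt_injective ((hb c).antisymm (hc b))⟩

end CycleLemma

section Parking

open Finset

/-- The order-free form of the parking condition: for every `k` at most the length, at least `k`
entries are smaller than `k`. It makes sense for sequences indexed by any finite type. -/
def IsParkingSequence {ι : Type*} [Fintype ι] (x : ι → ℕ) : Prop :=
  ∀ k ≤ Fintype.card ι, k ≤ #{i | x i < k}

lemma isParkingFunction_iff_forall_lt_card {n : ℕ} (x : Fin n → Fin n) :
    IsParkingFunction x ↔ ∀ k : Fin n, (k : ℕ) < #{i | x i ≤ k} := by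
  have sorted_le_iff {σ : Equiv.Perm (Fin n)} (hσ : Monotone (x ∘ σ)) (k : Fin n) :
      (x (σ k) : ℕ) ≤ k ↔ (k : ℕ) < #{i | x i ≤ k} := by
    have card_sorted : #{i | (x ∘ σ) i ≤ k} = #{i | x i ≤ k} := card_equiv σ (by simp)
    rw [← card_sorted, Tuple.lt_card_le_iff_apply_le_of_monotone hσ, Function.comp_apply,
      Fin.le_def]
  constructor
  · rintro ⟨σ, hσ, hle⟩ k
    exact (sorted_le_iff hσ k).1 (hle k)
  · intro h
    have hsort := Tuple.monotone_sort x
    exact ⟨Tuple.sort x, hsort, fun k => (sorted_le_iff hsort k).2 (h k)⟩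

lemma isParkingFunction_iff_isParkingSequence {n : ℕ} (x : Fin n → Fin n) :
    IsParkingFunction x ↔ IsParkingSequence fun i => (x i : ℕ) := by
  rw [isParkingFunction_iff_forall_lt_card, IsParkingSequence, Fintype.card_fin]
  constructor
  · rintro h (_ | k) hk
    · exact Nat.zero_le _
    · simpa only [Fin.le_def, Nat.lt_succ_iff, Nat.succ_le_iff] using h ⟨k, hk⟩
  · intro h k
    simpa only [Fin.le_def, Nat.lt_succ_iff, Nat.succ_le_iff] using h (k + 1) k.isLt

variable {ι : Type*} [Fintype ι]

lemma IsParkingSequence.lt_card {x : ι → ℕ} (hx : IsParkingSequence x) (i : ι) :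
    x i < Fintype.card ι :=
  (card_filter_eq_iff.1 ((card_filter_le _ _).antisymm (hx _ le_rfl))) i (mem_univ i)

variable {N : ℕ}

lemma card_filter_val_sub_lt [NeZero N] (f : ι → ZMod N) (c : ZMod N) {k : ℕ} (hk : k ≤ N) :
    #{i | (f i - c).val < k} = ∑ j ∈ range k, #{i | f i = c + j} := by
  rw [card_eq_sum_card_fiberwise (f := fun i => (f i - c).val) (t := range k) (by intro i; simp)]
  refine sum_congr rfl fun j hj => congrArg card ?_
  have hjk := mem_range.1 hj
  ext i
  have val_eq_iff : (f i - c).val = j ↔ f i = c + j := by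
    rw [← ZMod.val_cast_of_lt (hjk.trans_le hk), (ZMod.val_injective N).eq_iff, sub_eq_iff_eq_add',
      ZMod.val_cast_of_lt (hjk.trans_le hk)]
  simp only [mem_filter, mem_univ, true_and, ← val_eq_iff]
  omega

/-- The excess of cars over spots among the first `m` spots of the circle `ZMod N`, when `f i` is
the spot preferred by car `i`; spots beyond `N` wrap around. -/
def circleExcess (f : ι → ZMod N) (m : ℕ) : ℤ :=
  ∑ j ∈ range m, ((#{i | f i = j} : ℤ) - 1)

lemma circleExcess_add [NeZero N] (f : ι → ZMod N) (c : ℕ) {k : ℕ} (hk : k ≤ N) :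
    circleExcess f (c + k) = circleExcess f c + #{i | (f i - c).val < k} - k := by
  rw [card_filter_val_sub_lt f c hk, circleExcess, sum_range_add, ← circleExcess]
  simp [sum_sub_distrib, add_sub_assoc]

lemma circleExcess_add_period [NeZero N] (f : ι → ZMod N) (m : ℕ) :
    circleExcess f (m + N) = circleExcess f m + Fintype.card ι - N := by
  rw [circleExcess_add f m le_rfl, filter_true_of_mem fun i _ => ZMod.val_lt _, card_univ]

lemma isParkingSequence_val_sub_iff (hN : Fintype.card ι + 1 = N) (f : ι → ZMod N) (c : ZMod N) :
    (IsParkingSequence fun i => (f i - c).val) ↔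
      ∀ k < N, circleExcess f c.val ≤ circleExcess f (c.val + k) := by
  subst hN
  refine forall_congr' fun k => ?_
  rw [Nat.lt_succ_iff]
  refine imp_congr_right fun hk => ?_
  rw [circleExcess_add f _ (by omega), ZMod.natCast_zmod_val, add_sub_assoc,
    le_add_iff_nonneg_right, sub_nonneg, Nat.cast_le]

lemma existsUnique_isParkingSequence_val_sub (hN : Fintype.card ι + 1 = N) (f : ι → ZMod N) :
    ∃! c : ZMod N, IsParkingSequence fun i => (f i - c).val := by
  have : NeZero N := ⟨by omega⟩
  simp only [isParkingSequence_val_sub_iff hN]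
  refine existsUnique_forall_le_add fun m => ?_
  rw [circleExcess_add_period]
  omega

variable {κ : Type*}

lemma isComplement_range_const_isParkingSequence_comp (hN : Fintype.card ι + 1 = N) (q : ι → κ) :
    AddSubgroup.IsComplement (Set.range (Function.const κ : ZMod N → κ → ZMod N))
      {h : κ → ZMod N | IsParkingSequence fun i => (h (q i)).val} := by
  refine AddSubgroup.isComplement_iff_existsUnique_neg_add_mem.2 fun h => ?_
  obtain ⟨c, hc, hunique⟩ := existsUnique_isParkingSequence_val_sub hN (h ∘ q)
  refine ⟨⟨_, c, rfl⟩, ?_, ?_⟩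
  · simpa [neg_add_eq_sub] using hc
  · rintro ⟨_, b, rfl⟩ hb
    have hbc : b = c := hunique b (by simpa [neg_add_eq_sub] using hb)
    exact Subtype.ext (congrArg (Function.const κ) hbc)

lemma card_isParkingSequence_comp [Finite κ] [Nonempty κ] (hN : Fintype.card ι + 1 = N)
    (q : ι → κ) :
    Nat.card {h : κ → ZMod N // IsParkingSequence fun i => (h (q i)).val} =
      N ^ (Nat.card κ - 1) := by
  have hmul := (isComplement_range_const_isParkingSequence_comp hN q).card_mul_card
  rw [Nat.card_range_of_injective Function.const_injective, Nat.card_fun, Nat.card_zmod,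
    ← mul_pow_sub_one Nat.card_pos.ne' N] at hmul
  exact Nat.eq_of_mul_eq_mul_left (by omega) hmul

lemma card_isParkingFunction_and_le_ker_eq_card_quotient_fun {n : ℕ} (r : Setoid (Fin n)) :
    Nat.card {x : Fin n → Fin n // IsParkingFunction x ∧ r ≤ Setoid.ker x} =
      Nat.card {h : Quotient r → ZMod (n + 1) // IsParkingSequence fun i => (h ⟦i⟧).val} := by
  symm
  let toParking (h : {h : Quotient r → ZMod (n + 1) // IsParkingSequence fun i => (h ⟦i⟧).val}) :
      {x : Fin n → Fin n // IsParkingFunction x ∧ r ≤ Setoid.ker x} :=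
    ⟨fun i => ⟨(h.1 ⟦i⟧).val, by simpa using h.2.lt_card i⟩,
      (isParkingFunction_iff_isParkingSequence _).2 h.2,
      fun _ _ hij => Fin.ext (congrArg (fun a => (h.1 a).val) (Quotient.sound hij))⟩
  refine Nat.card_eq_of_bijective toParking ⟨fun h h' heq => ?_, fun ⟨x, hx, hr⟩ => ?_⟩
  · refine Subtype.ext (funext (Quotient.ind fun i => ZMod.val_injective _ ?_))
    exact congrArg (fun x => (x.1 i).val) heq
  · have val_cast (i : Fin n) : ((x i : ℕ) : ZMod (n + 1)).val = x i :=
      ZMod.val_cast_of_lt (by omega)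
    refine ⟨⟨Quotient.lift (fun i => ((x i : ℕ) : ZMod (n + 1))) fun i j hij => ?_, ?_⟩, ?_⟩
    · rw [Setoid.ker_def.1 (hr hij)]
    · simpa only [Quotient.lift_mk, val_cast] using (isParkingFunction_iff_isParkingSequence x).1 hx
    · exact Subtype.ext (funext fun i => Fin.ext (val_cast i))

lemma card_isParkingFunction_and_le_ker {n : ℕ} (hn : 1 ≤ n) (r : Setoid (Fin n)) :
    Nat.card {x : Fin n → Fin n // IsParkingFunction x ∧ r ≤ Setoid.ker x} =
      (n + 1) ^ (Nat.card (Quotient r) - 1) := by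
  have : Nonempty (Quotient r) := ⟨⟦⟨0, hn⟩⟧⟩
  rw [card_isParkingFunction_and_le_ker_eq_card_quotient_fun,
    card_isParkingSequence_comp (by rw [Fintype.card_fin])]

end Parking

section Cycles

open Equiv.Perm

variable {α β : Type*}

lemma sameCycle_setoid_le_ker_iff {π : Equiv.Perm α} {f : α → β} :
    SameCycle.setoid π ≤ Setoid.ker f ↔ ∀ i, f (π i) = f i := by
  constructor
  · exact fun h i => h (sameCycle_apply_left.2 (SameCycle.refl π i))
  · intro h
    have apply_zpow (m : ℤ) (i : α) : f ((π ^ m) i) = f i := by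
      induction m using Int.induction_on generalizing i with
      | zero => rfl
      | succ m ih => rw [zpow_add_one, mul_apply, ih, h]
      | pred m ih => rw [zpow_sub_one, mul_apply, ih, ← h, coe_inv, Equiv.apply_symm_apply]
    rintro i _ ⟨m, rfl⟩
    exact (apply_zpow m i).symm

variable [Fintype α] [DecidableEq α]

/-- The cycle of `π` through `i`, as one of the nontrivial cycle factors of `π` if `i` is moved and
as a fixed point otherwise. -/
def cycleFactorOrFixedPt (π : Equiv.Perm α) (i : α) : π.cycleFactorsFinset ⊕ {i // π i = i} :=
  if h : π i = i then .inr ⟨i, h⟩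
  else .inl ⟨π.cycleOf i, cycleOf_mem_cycleFactorsFinset_iff.2 (mem_support.2 h)⟩

lemma cycleFactorOrFixedPt_surjective (π : Equiv.Perm α) :
    Function.Surjective (cycleFactorOrFixedPt π) := by
  rintro (⟨c, hc⟩ | ⟨i, hi⟩)
  · obtain ⟨i, hi⟩ := (mem_cycleFactorsFinset_iff.1 hc).1.nonempty_support
    have hmoved : π i ≠ i := mem_support.1 (mem_cycleFactorsFinset_support_le hc hi)
    exact ⟨i, by simp [cycleFactorOrFixedPt, hmoved, ← cycle_is_cycleOf hi hc]⟩
  · exact ⟨i, by simp [cycleFactorOrFixedPt, hi]⟩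

lemma ker_cycleFactorOrFixedPt (π : Equiv.Perm α) :
    Setoid.ker (cycleFactorOrFixedPt π) = SameCycle.setoid π := by
  ext i j
  change cycleFactorOrFixedPt π i = cycleFactorOrFixedPt π j ↔ SameCycle π i j
  by_cases hi : π i = i <;> by_cases hj : π j = j
  · simpa [cycleFactorOrFixedPt, hi, hj] using
      ⟨fun h => h.sameCycle π, fun h : SameCycle π i j => h.eq_of_left hi⟩
  · simpa [cycleFactorOrFixedPt, hi, hj] using
      fun h : SameCycle π i j => hj (h.apply_eq_self_iff.1 hi)
  · simpa [cycleFactorOrFixedPt, hi, hj] using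
      fun h : SameCycle π i j => hi (h.apply_eq_self_iff.2 hj)
  · simpa [cycleFactorOrFixedPt, hi, hj] using
      (sameCycle_iff_cycleOf_eq_of_mem_support (mem_support.2 hi) (mem_support.2 hj)).symm

lemma card_quotient_sameCycle (π : Equiv.Perm α) :
    Nat.card (Quotient (SameCycle.setoid π)) =
      Multiset.card π.cycleType + (Finset.univ.filter fun i => π i = i).card := by
  rw [← ker_cycleFactorOrFixedPt, Nat.card_congr
    (Setoid.quotientKerEquivOfSurjective _ (cycleFactorOrFixedPt_surjective π)), Nat.card_sum,
    cycleType_def, Multiset.card_map]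
  simp [Fintype.card_subtype]

end Cycles

/-- Let `π` be a permutation of `{1,…,n}` with `l` cycles in its disjoint cycle decomposition
(fixed points counted as cycles, i.e. `l` is the number of nontrivial cycles, given by
`π.cycleType.card`, plus the number of fixed points).  The number of parking functions of
length `n` fixed by `π` acting by permuting coordinates is `(n+1)^(l-1)`. -/
theorem card_fixed_parkingFunctions (n : ℕ) (hn : 1 ≤ n) (π : Equiv.Perm (Fin n)) (l : ℕ)
    (hl : l = Multiset.card π.cycleType +
        (Finset.univ.filter fun i : Fin n => π i = i).card) :
    Nat.card {x : Fin n → Fin n // IsParkingFunction x ∧ ∀ i, x (π i) = x i} =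
      (n + 1) ^ (l - 1) := by
  simp only [← sameCycle_setoid_le_ker_iff]
  rw [card_isParkingFunction_and_le_ker hn, card_quotient_sameCycle, ← hl]
end

section
/- (Lackner–Panholzer, Theorem 2.6) Let star_n be the rooted labelled tree on {1,…,n} with root n and nodes 1,…,n−1 all attached to the root, and let chain_n be the rooted labelled tree on {1,…,n} with root n and node j attached to node j+1 for 1 ≤ j ≤ n−1. Then for every rooted labelled tree T on {1,…,n} and every 0 ≤ m ≤ n: S(star_n, m) ≤ S(T, m) ≤ S(chain_n, m), and moreover n(n−1)⋯(n−m+1) + binomial(m,2)·(n−1)(n−2)⋯(n−m+1) ≤ S(T,m) ≤ (n−m+1)·(n+1)^(m−1). -/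
/-- A rooted labelled tree on the vertex set `Fin n`, encoded by its root and its parent
map: the root is its own parent and every vertex reaches the root by iterating the parent
map (this data is equivalent to a tree on `{1,…,n}` with a distinguished root). -/
structure LabelledRootedTree (n : ℕ) where
  root : Fin n
  parent : Fin n → Fin n
  parent_root : parent root = root
  reaches_root : ∀ v : Fin n, ∃ k : ℕ, parent^[k] v = root

/-- The parking procedure driven by a step map `f` on `Fin n` (the parent map of a tree, or
an `n`-mapping).  `occ` is the list of occupied vertices; the drivers in the list arrive in
order, and the driver starting at `v` parks at `f^[i] v` for the least `i` such that
`f^[i] v` is unoccupied (searching `i < n` suffices, since the forward orbit of `v` has at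
most `n` distinct vertices, all appearing among the first `n` iterates, in visit order).
The result is `none` if some driver finds every vertex on its route occupied. -/
def parkAux (n : ℕ) (f : Fin n → Fin n) : List (Fin n) → List (Fin n) → Option (List (Fin n))
  | occ, [] => some occ
  | occ, v :: rest =>
    match (List.range n).find? (fun i => decide (f^[i] v ∉ occ)) with
    | none => none
    | some i => parkAux n f (f^[i] v :: occ) rest

/-- `s : Fin m → Fin n` is a parking function for the step map `f` on `Fin n`:
all `m` drivers, arriving in order with preferences `s 1, …, s m`, park successfully. -/
def ParkingSucceeds {n m : ℕ} (f : Fin n → Fin n) (s : Fin m → Fin n) : Prop :=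
  (parkAux n f [] (List.ofFn s)).isSome

/-- `s` is a tree parking function for the rooted labelled tree `T`: each driver `k` starts
at `s k` and drives towards the root, parking at the first unoccupied vertex. -/
def IsTreeParking {n m : ℕ} (T : LabelledRootedTree n) (s : Fin m → Fin n) : Prop :=
  ParkingSucceeds T.parent s

/-- `S(T,m)`: the number of tree parking functions `s ∈ {1,…,n}^m` for `T`. -/
noncomputable def STree {n : ℕ} (T : LabelledRootedTree n) (m : ℕ) : ℕ :=
  Nat.card {s : Fin m → Fin n // IsTreeParking T s}

/-!
Parking along a step map `f` obeys a Hall-type criterion: `s` is a parking function if and only if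
every set `U` of vertices with `f U ⊆ U` contains at most `|U|` of the preferences. If a bijection
`σ` of the vertices sends each edge `v → parent v` of a tree `A` to a pair `σ v`, `σ (parent v)`
lying in this order on a route of a tree `B`, then `s ↦ σ ∘ s` therefore maps parking functions of
`A` to parking functions of `B`. Exchanging roots compares the star with any tree; sorting the
vertices by decreasing depth compares any tree with the chain.

For the explicit lower bound, the criterion accepts every injective `s`, and every `s` that avoids
the root and is injective apart from a single coincidence `s i = s j`: a nonempty `U` with
`f U ⊆ U` contains the root, which makes up for the coincidence.

The explicit upper bound is Pollak's circular argument: parking functions of the chain are the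
sequences on the cycle with `n + 1` vertices that leave the additional vertex free. Each sequence
on the cycle leaves `n + 1 - m` vertices free and, by rotation, all vertices are free equally often.
-/

open Finset

section Iterate

variable {α : Type*}

theorem exists_lt_card_iterate_eq [Fintype α] (f : α → α) (v : α) (i : ℕ) :
    ∃ j < Fintype.card α, f^[j] v = f^[i] v := by
  classical
  have h : ∃ j, f^[j] v = f^[i] v := ⟨i, rfl⟩
  have iterate_ne : ∀ a b, a < b → b ≤ Nat.find h → f^[a] v ≠ f^[b] v := by
    intro a b hab hb heq
    refine Nat.find_min h (m := Nat.find h - b + a) (by lia) ?_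
    rw [Function.iterate_add_apply, heq, ← Function.iterate_add_apply, Nat.sub_add_cancel hb]
    exact Nat.find_spec h
  have injOn : Set.InjOn (fun k => f^[k] v) (range (Nat.find h + 1)) := by
    intro a ha b hb heq
    simp only [coe_range, Set.mem_Iio] at ha hb
    by_contra hab
    rcases lt_or_gt_of_ne hab with hab | hab
    · exact iterate_ne a b hab (by lia) heq
    · exact iterate_ne b a hab (by lia) heq.symm
  refine ⟨Nat.find h, ?_, Nat.find_spec h⟩
  calc Nat.find h < #(range (Nat.find h + 1)) := by simp
    _ ≤ #(univ : Finset α) := card_le_card_of_injOn _ (fun _ _ => mem_univ _) injOn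

theorem mem_of_iterate_mem {f : α → α} {O U : Set α} (hback : ∀ w ∈ O, f w ∈ U → w ∈ U)
    {i : ℕ} {v : α} (hroute : ∀ j < i, f^[j] v ∈ O) (hi : f^[i] v ∈ U) : v ∈ U := by
  induction i with
  | zero => exact hi
  | succ i ih =>
    rw [Function.iterate_succ_apply'] at hi
    exact ih (fun j hj => hroute j (by lia)) (hback _ (hroute i i.lt_succ_self) hi)

end Iterate

section ParkingProcess

variable {n : ℕ} {f : Fin n → Fin n} {occ occ' l : List (Fin n)} {v : Fin n}

theorem parkAux_cons_of_first_free {i : ℕ} (hfree : f^[i] v ∉ occ)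
    (hocc : ∀ j < i, f^[j] v ∈ occ) :
    parkAux n f occ (v :: l) = parkAux n f (f^[i] v :: occ) l := by
  have hi : i < n := by
    obtain ⟨j, hj, heq⟩ := exists_lt_card_iterate_eq f v i
    rw [Fintype.card_fin] at hj
    by_contra hni
    exact hfree (heq ▸ hocc j (by lia))
  have hfind : (List.range n).find? (fun i => decide (f^[i] v ∉ occ)) = some i := by
    simpa [List.find?_range_eq_some] using ⟨hfree, hi, hocc⟩
  rw [parkAux, hfind]

theorem parkAux_cons_of_forall_mem (hocc : ∀ i, f^[i] v ∈ occ) :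
    parkAux n f occ (v :: l) = none := by
  have hfind : (List.range n).find? (fun i => decide (f^[i] v ∉ occ)) = none := by
    simpa using fun i _ => hocc i
  rw [parkAux, hfind]

theorem forall_iterate_mem_or_exists_first_free (f : Fin n → Fin n) (occ : List (Fin n))
    (v : Fin n) :
    (∀ i, f^[i] v ∈ occ) ∨ ∃ i, f^[i] v ∉ occ ∧ ∀ j < i, f^[j] v ∈ occ := by
  by_cases h : ∃ i, f^[i] v ∉ occ
  · exact .inr ⟨Nat.find h, Nat.find_spec h, fun j hj => not_not.1 (Nat.find_min h hj)⟩
  · exact .inl (by simpa using h)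

theorem exists_first_free_of_parkAux_cons_eq_some (h : parkAux n f occ (v :: l) = some occ') :
    ∃ i, f^[i] v ∉ occ ∧ (∀ j < i, f^[j] v ∈ occ) ∧
      parkAux n f (f^[i] v :: occ) l = some occ' := by
  rcases forall_iterate_mem_or_exists_first_free f occ v with hocc | ⟨i, hfree, hocc⟩
  · simp [parkAux_cons_of_forall_mem hocc] at h
  · exact ⟨i, hfree, hocc, parkAux_cons_of_first_free hfree hocc ▸ h⟩

theorem card_sdiff_toFinset_cons_of_mem {U : Finset (Fin n)} (hU : v ∈ U) (hocc : v ∉ occ) :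
    #(U \ (v :: occ).toFinset) + 1 = #(U \ occ.toFinset) := by
  rw [List.toFinset_cons, sdiff_insert, card_erase_add_one (by simp [hU, hocc])]

theorem sdiff_toFinset_cons_of_notMem {U : Finset (Fin n)} (hU : v ∉ U) :
    U \ (v :: occ).toFinset = U \ occ.toFinset := by
  rw [List.toFinset_cons, sdiff_insert, erase_eq_of_notMem (by simp [hU])]

theorem countP_mem_le_card_sdiff_of_parkAux_eq_some {U : Finset (Fin n)}
    (hU : Set.MapsTo f U U) (h : parkAux n f occ l = some occ') :
    l.countP (· ∈ U) ≤ #(U \ occ.toFinset) := by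
  induction l generalizing occ with
  | nil => simp
  | cons v l ih =>
    obtain ⟨i, hfree, -, hrest⟩ := exists_first_free_of_parkAux_cons_eq_some h
    have hl := ih hrest
    rw [List.countP_cons]
    by_cases hspot : f^[i] v ∈ U
    · have := card_sdiff_toFinset_cons_of_mem hspot hfree
      split <;> lia
    · have hv : v ∉ U := fun hv => hspot (hU.iterate i hv)
      rw [sdiff_toFinset_cons_of_notMem hspot] at hl
      simpa [hv] using hl

theorem exists_card_sdiff_lt_countP_of_parkAux_eq_none (h : parkAux n f occ l = none) :
    ∃ U : Finset (Fin n), Set.MapsTo f U U ∧ (∀ w ∈ occ, f w ∈ U → w ∈ U) ∧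
      #(U \ occ.toFinset) < l.countP (· ∈ U) := by
  classical
  induction l generalizing occ with
  | nil => simp [parkAux] at h
  | cons v l ih =>
    rcases forall_iterate_mem_or_exists_first_free f occ v with hocc | ⟨i, hfree, hocc⟩
    · refine ⟨({w | ∀ i, f^[i] w ∈ occ} : Finset (Fin n)), fun w hw => ?_, fun w hw hfw => ?_, ?_⟩
      · simp only [coe_filter, mem_univ, true_and, Set.mem_ofPred_eq] at hw ⊢
        exact fun i => hw (i + 1)
      · simp only [mem_filter_univ] at hfw ⊢
        exact fun | 0 => hw | i + 1 => hfw i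
      · have hsub : ({w | ∀ i, f^[i] w ∈ occ} : Finset (Fin n)) ⊆ occ.toFinset := by
          intro w hw
          simpa using (mem_filter.1 hw).2 0
        simp [sdiff_eq_empty_iff_subset.2 hsub, hocc]
    · rw [parkAux_cons_of_first_free hfree hocc] at h
      obtain ⟨U, hU, hback, hlt⟩ := ih h
      refine ⟨U, hU, fun w hw => hback w (List.mem_cons_of_mem _ hw), ?_⟩
      rw [List.countP_cons]
      by_cases hspot : f^[i] v ∈ U
      · -- The driver reached `U` through occupied vertices only, so the backward closure of `U`
        -- in `occ` puts its starting point in `U`.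
        have hv : v ∈ U := mem_of_iterate_mem (O := {w | w ∈ occ}) (U := U)
          (fun w hw => hback w (List.mem_cons_of_mem _ hw)) hocc hspot
        have := card_sdiff_toFinset_cons_of_mem hspot hfree
        simp only [hv, decide_true, if_true]
        lia
      · rw [sdiff_toFinset_cons_of_notMem hspot] at hlt
        lia

end ParkingProcess

section HallCriterion

variable {n N m : ℕ} {f : Fin n → Fin n} {g : Fin N → Fin N} {s : Fin m → Fin n}

theorem parkingSucceeds_iff_forall_card_le :
    ParkingSucceeds f s ↔
      ∀ U : Finset (Fin n), Set.MapsTo f U U → #{k | s k ∈ U} ≤ #U := by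
  have countP_ofFn (U : Finset (Fin n)) :
      (List.ofFn s).countP (· ∈ U) = #{k | s k ∈ U} := by
    rw [List.ofFn_eq_map, List.countP_map, List.countP_eq_length_filter]
    rfl
  constructor
  · intro h U hU
    obtain ⟨occ, hocc⟩ := Option.isSome_iff_exists.1 h
    simpa [countP_ofFn] using countP_mem_le_card_sdiff_of_parkAux_eq_some hU hocc
  · intro h
    by_contra hfail
    obtain ⟨U, hU, -, hlt⟩ := exists_card_sdiff_lt_countP_of_parkAux_eq_none
      (Option.not_isSome_iff_eq_none.1 hfail)
    simp only [countP_ofFn, List.toFinset_nil, sdiff_empty] at hlt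
    exact (h U hU).not_gt hlt

theorem ParkingSucceeds.comp_of_injective {σ : Fin n → Fin N} (hσ : σ.Injective)
    (hroute : ∀ v, ∃ k, g^[k] (σ v) = σ (f v)) (hs : ParkingSucceeds f s) :
    ParkingSucceeds g (σ ∘ s) := by
  rw [parkingSucceeds_iff_forall_card_le] at hs ⊢
  intro U hU
  have hpre : Set.MapsTo f (U.preimage σ hσ.injOn) (U.preimage σ hσ.injOn) := by
    intro v hv
    obtain ⟨k, hk⟩ := hroute v
    simp only [coe_preimage, Set.mem_preimage] at hv ⊢
    exact hk ▸ hU.iterate k hv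
  calc #{k | (σ ∘ s) k ∈ U} = #{k | s k ∈ U.preimage σ hσ.injOn} := by simp
    _ ≤ #(U.preimage σ hσ.injOn) := hs _ hpre
    _ ≤ #U := card_le_card_of_injOn σ (by simp [Set.MapsTo]) hσ.injOn

theorem parkingSucceeds_of_injective (f : Fin n → Fin n) (hs : s.Injective) :
    ParkingSucceeds f s :=
  parkingSucceeds_iff_forall_card_le.2 fun _ _ =>
    card_le_card_of_injOn s (by simp [Set.MapsTo]) hs.injOn

end HallCriterion

section Comparison

variable {n N m : ℕ}

theorem STree_le_STree_of_injective {A : LabelledRootedTree n} {B : LabelledRootedTree N}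
    {σ : Fin n → Fin N} (hσ : σ.Injective)
    (hroute : ∀ v, ∃ k, B.parent^[k] (σ v) = σ (A.parent v)) : STree A m ≤ STree B m :=
  Nat.card_le_card_of_injective
    (fun s => ⟨σ ∘ s.1, ParkingSucceeds.comp_of_injective hσ hroute s.2⟩)
    fun _ _ h => Subtype.ext (hσ.comp_left (congrArg Subtype.val h))

theorem STree_le_STree_of_parent_eq_root {S T : LabelledRootedTree n}
    (hS : ∀ v, S.parent v = S.root) : STree S m ≤ STree T m := by
  refine STree_le_STree_of_injective (Equiv.swap S.root T.root).injective fun v => ?_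
  simpa only [hS, Equiv.swap_apply_left] using T.reaches_root _

namespace LabelledRootedTree

/-- The distance from a vertex to the root. -/
noncomputable def depth (T : LabelledRootedTree n) (v : Fin n) : ℕ :=
  Nat.find (T.reaches_root v)

theorem depth_parent_lt (T : LabelledRootedTree n) {v : Fin n} (hv : v ≠ T.root) :
    T.depth (T.parent v) < T.depth v := by
  have hreach : T.parent^[T.depth v] v = T.root := Nat.find_spec (T.reaches_root v)
  cases hd : T.depth v with
  | zero => exact absurd (by rwa [hd] at hreach) hv
  | succ k =>
    rw [hd, Function.iterate_succ_apply] at hreach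
    exact Nat.lt_succ_of_le (Nat.find_min' _ hreach)

theorem exists_perm_le_parent (T : LabelledRootedTree n) :
    ∃ σ : Equiv.Perm (Fin n), ∀ v, σ v ≤ σ (T.parent v) := by
  let negDepth : Fin n → ℕᵒᵈ := fun v => OrderDual.toDual (T.depth v)
  refine ⟨(Tuple.sort negDepth).symm, fun v => ?_⟩
  by_cases hv : v = T.root
  · rw [hv, T.parent_root]
  · by_contra! hlt
    have hdepth : T.depth v ≤ T.depth (T.parent v) := by
      simpa [negDepth] using Tuple.monotone_sort negDepth hlt.le
    exact hdepth.not_gt (T.depth_parent_lt hv)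

end LabelledRootedTree

theorem iterate_sub_eq_of_le {f : Fin n → Fin n}
    (hf : ∀ v : Fin n, (v : ℕ) + 1 < n → (f v : ℕ) = v + 1) {v w : Fin n} (hvw : v ≤ w) :
    f^[(w : ℕ) - v] v = w := by
  have val_iterate : ∀ d, (v : ℕ) + d < n → (f^[d] v : ℕ) = v + d := by
    intro d
    induction d with
    | zero => simp
    | succ d ih =>
      intro hd
      have hval := ih (by lia)
      rw [Function.iterate_succ_apply', hf _ (by lia), hval, add_assoc]
  exact Fin.ext ((val_iterate _ (by lia)).trans (by lia))

theorem STree_le_STree_of_parent_eq_add_one {T C : LabelledRootedTree n}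
    (hC : ∀ v : Fin n, (v : ℕ) + 1 < n → (C.parent v : ℕ) = v + 1) :
    STree T m ≤ STree C m := by
  obtain ⟨σ, hσ⟩ := T.exists_perm_le_parent
  exact STree_le_STree_of_injective σ.injective fun v => ⟨_, iterate_sub_eq_of_le hC (hσ v)⟩

end Comparison

section SingleRepetition

variable {ι α : Type*} {s : ι → α} {i j i' j' : ι}

/-- The only coincidence between two values of `s` is `s i = s j` (when `i ≠ j`); these functions
are what the summand `binomial(m,2)·(n−1)⋯(n−m+1)` counts. -/
def RepeatsOnlyAt (s : ι → α) (i j : ι) : Prop :=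
  s i = s j ∧ Set.InjOn s {j}ᶜ

theorem RepeatsOnlyAt.comp {β : Type*} {g : α → β} (hg : g.Injective) (h : RepeatsOnlyAt s i j) :
    RepeatsOnlyAt (g ∘ s) i j :=
  ⟨congrArg g h.1, hg.comp_injOn h.2⟩

theorem RepeatsOnlyAt.eq_and_eq [LinearOrder ι] (h : RepeatsOnlyAt s i j) (hij : i < j)
    (h' : RepeatsOnlyAt s i' j') (hij' : i' < j') : i = i' ∧ j = j' := by
  have eq_of_ne {a b : ι} (ha : a ≠ j) (hb : b ≠ j) (hab : s a = s b) : a = b := h.2 ha hb hab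
  have hj' : j = j' := by
    by_contra hne
    by_cases hi' : i' = j
    · subst hi'
      have : i = j' := eq_of_ne hij.ne (Ne.symm hne) (h.1.trans h'.1)
      exact (hij.trans hij').ne this
    · exact hij'.ne (eq_of_ne hi' (Ne.symm hne) h'.1)
  subst hj'
  exact ⟨eq_of_ne hij.ne hij'.ne (h.1.trans h'.1.symm), rfl⟩

/-- A function repeating only at `i` and `j` is determined by its injective restriction to the
complement of `j`. -/
def repeatsOnlyAtEquivEmbedding [DecidableEq ι] (α : Type*) (hij : i ≠ j) :
    {s : ι → α // RepeatsOnlyAt s i j} ≃ ({k : ι // k ≠ j} ↪ α) where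
  toFun s := ⟨fun k => s.1 k, fun a b hab => Subtype.ext (s.2.2 a.2 b.2 hab)⟩
  invFun e := ⟨fun k => if hk : k = j then e ⟨i, hij⟩ else e ⟨k, hk⟩, by simp [hij], by
    intro a ha b hb hab
    simpa [show a ≠ j from ha, show b ≠ j from hb] using hab⟩
  left_inv s := by
    ext k
    by_cases hk : k = j
    · subst hk
      exact (dif_pos rfl).trans s.2.1
    · exact dif_neg hk
  right_inv e := by
    ext k
    simp [k.2]

variable [Fintype ι] [Fintype α]

open Classical in
theorem card_repeatsOnlyAt [DecidableEq ι] (hij : i ≠ j) :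
    #{s : ι → α | RepeatsOnlyAt s i j} =
      (Fintype.card α).descFactorial (Fintype.card ι - 1) := by
  rw [← Fintype.card_subtype, Fintype.card_congr (repeatsOnlyAtEquivEmbedding α hij),
    Fintype.card_embedding_eq, Fintype.card_subtype_compl, Fintype.card_subtype_eq]

open Classical in
theorem card_exists_lt_repeatsOnlyAt [LinearOrder ι] :
    #{s : ι → α | ∃ i j, i < j ∧ RepeatsOnlyAt s i j} =
      (Fintype.card ι).choose 2 * (Fintype.card α).descFactorial (Fintype.card ι - 1) := by
  let pairs : Finset (ι × ι) := {p | p.1 < p.2}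
  let fiber (p : ι × ι) : Finset (ι → α) := {s | RepeatsOnlyAt s p.1 p.2}
  have pairwiseDisjoint : (pairs : Set (ι × ι)).PairwiseDisjoint fiber := by
    intro p hp q hq hpq
    refine disjoint_left.2 fun s hsp hsq => hpq ?_
    simp only [pairs, fiber, mem_coe, mem_filter_univ] at hp hq hsp hsq
    obtain ⟨h₁, h₂⟩ := hsp.eq_and_eq hp hsq hq
    exact Prod.ext h₁ h₂
  calc #{s : ι → α | ∃ i j, i < j ∧ RepeatsOnlyAt s i j} = #(pairs.biUnion fiber) := by
        congr 1; ext s; simp [pairs, fiber]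
    _ = ∑ p ∈ pairs, #(fiber p) := card_biUnion pairwiseDisjoint
    _ = ∑ _p ∈ pairs, (Fintype.card α).descFactorial (Fintype.card ι - 1) :=
        sum_congr rfl fun p hp => card_repeatsOnlyAt (mem_filter.1 hp).2.ne
    _ = _ := by rw [sum_const, smul_eq_mul, Fintype.card_product_filter_lt]

theorem card_injective [DecidableEq ι] [DecidableEq α] :
    #{s : ι → α | s.Injective} = (Fintype.card α).descFactorial (Fintype.card ι) := by
  rw [← Fintype.card_subtype, Fintype.card_congr (Equiv.subtypeInjectiveEquivEmbedding ι α),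
    Fintype.card_embedding_eq]

end SingleRepetition

section LowerBound

variable {n m : ℕ} (T : LabelledRootedTree n)

namespace LabelledRootedTree

open Classical in
theorem STree_eq_card : STree T m = #{s : Fin m → Fin n | IsTreeParking T s} := by
  rw [STree, Nat.card_eq_fintype_card, Fintype.card_subtype]

theorem root_mem_of_mapsTo {U : Set (Fin n)} (hU : Set.MapsTo T.parent U U) (hne : U.Nonempty) :
    T.root ∈ U := by
  obtain ⟨v, hv⟩ := hne
  obtain ⟨k, hk⟩ := T.reaches_root v
  exact hk ▸ hU.iterate k hv

theorem isTreeParking_of_injOn_compl {s : Fin m → Fin n} {j : Fin m} (hinj : Set.InjOn s {j}ᶜ)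
    (hroot : ∀ k, s k ≠ T.root) : IsTreeParking T s := by
  refine parkingSucceeds_iff_forall_card_le.2 fun U hU => ?_
  rcases U.eq_empty_or_nonempty with rfl | hne
  · simp
  calc #{k | s k ∈ U} ≤ #(({k | s k ∈ U} : Finset (Fin m)).erase j) + 1 := by
        have := pred_card_le_card_erase (s := ({k | s k ∈ U} : Finset (Fin m))) (a := j)
        lia
    _ ≤ #(U.erase T.root) + 1 := by
        gcongr
        refine card_le_card_of_injOn s (fun k hk => ?_) (hinj.mono fun k hk => ?_)
        · simp_all
        · simp_all
    _ = #U := card_erase_add_one (T.root_mem_of_mapsTo hU hne)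

open Classical in
theorem descFactorial_add_choose_mul_le_STree :
    n.descFactorial m + m.choose 2 * (n - 1).descFactorial (m - 1) ≤ STree T m := by
  let repeating : Finset (Fin m → {v // v ≠ T.root}) := {s | ∃ i j, i < j ∧ RepeatsOnlyAt s i j}
  let incl : (Fin m → {v // v ≠ T.root}) ↪ (Fin m → Fin n) :=
    ⟨(Subtype.val ∘ ·), Subtype.val_injective.comp_left⟩
  have disjoint : Disjoint ({s | s.Injective} : Finset (Fin m → Fin n)) (repeating.map incl) := by
    simp only [disjoint_right, mem_map, repeating, mem_filter_univ]
    rintro _ ⟨s, ⟨i, j, hij, hs⟩, rfl⟩ hinj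
    exact hij.ne (hinj (congrArg Subtype.val hs.1))
  have card_repeating : #repeating = m.choose 2 * (n - 1).descFactorial (m - 1) := by
    simpa [repeating] using
      card_exists_lt_repeatsOnlyAt (ι := Fin m) (α := {v // v ≠ T.root})
  calc n.descFactorial m + m.choose 2 * (n - 1).descFactorial (m - 1)
      = #(({s | s.Injective} : Finset (Fin m → Fin n)) ∪ repeating.map incl) := by
        rw [card_union_of_disjoint disjoint, card_map, card_repeating, card_injective]
        simp
    _ ≤ #{s : Fin m → Fin n | IsTreeParking T s} := by
        refine card_le_card (union_subset (fun s hs => ?_) fun s hs => ?_)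
        · simp only [mem_filter_univ] at hs ⊢
          exact parkingSucceeds_of_injective T.parent hs
        · simp only [mem_map, repeating, mem_filter_univ] at hs ⊢
          obtain ⟨s, ⟨i, j, -, hs⟩, rfl⟩ := hs
          exact T.isTreeParking_of_injOn_compl (hs.comp Subtype.val_injective).2 fun k => (s k).2
    _ = STree T m := T.STree_eq_card.symm

end LabelledRootedTree

end LowerBound

section CircularParking

variable {n N m : ℕ} {f : Fin n → Fin n} {g : Fin N → Fin N} {occ occ' l : List (Fin n)}
  {s : Fin m → Fin n} {v : Fin n}

theorem parkAux_map {σ : Fin n → Fin N} (hσ : σ.Injective)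
    (hfg : ∀ v, f v = v ∨ g (σ v) = σ (f v)) (h : parkAux n f occ l = some occ') :
    parkAux N g (occ.map σ) (l.map σ) = some (occ'.map σ) := by
  induction l generalizing occ with
  | nil => simp_all [parkAux]
  | cons v l ih =>
    obtain ⟨i, hfree, hocc, hrest⟩ := exists_first_free_of_parkAux_cons_eq_some h
    have iterate_comm : ∀ j ≤ i, g^[j] (σ v) = σ (f^[j] v) := by
      intro j
      induction j with
      | zero => simp
      | succ j ihj =>
        intro hj
        rcases hfg (f^[j] v) with hfix | hcomm
        · -- A route cannot leave a fixed point of `f`, so `g` need not match the step there.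
          have hstuck : f^[i] v = f^[j] v := by
            rw [← Nat.sub_add_cancel (Nat.le_of_succ_le hj), Function.iterate_add_apply,
              Function.iterate_fixed hfix]
          exact absurd (hstuck ▸ hocc j hj) hfree
        · rw [Function.iterate_succ_apply', Function.iterate_succ_apply', ihj (by lia), hcomm]
    rw [List.map_cons, parkAux_cons_of_first_free (i := i), iterate_comm i le_rfl]
    · exact ih hrest
    · rwa [iterate_comm i le_rfl, List.mem_map_of_injective hσ]
    · intro j hj
      rw [iterate_comm j hj.le]
      exact List.mem_map_of_mem (hocc j hj)

theorem length_of_parkAux_eq_some (h : parkAux n f occ l = some occ') :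
    occ'.length = occ.length + l.length := by
  induction l generalizing occ with
  | nil => simp_all [parkAux]
  | cons v l ih =>
    obtain ⟨i, -, -, hrest⟩ := exists_first_free_of_parkAux_cons_eq_some h
    rw [ih hrest, List.length_cons, List.length_cons]
    lia

theorem nodup_of_parkAux_eq_some (h : parkAux n f occ l = some occ') (hocc : occ.Nodup) :
    occ'.Nodup := by
  induction l generalizing occ with
  | nil => simp_all [parkAux]
  | cons v l ih =>
    obtain ⟨i, hfree, -, hrest⟩ := exists_first_free_of_parkAux_cons_eq_some h
    exact ih hrest (List.nodup_cons.2 ⟨hfree, hocc⟩)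

/-- All drivers of `s` park successfully and vertex `v` stays unoccupied. -/
def ParkingLeavesFree (f : Fin n → Fin n) (s : Fin m → Fin n) (v : Fin n) : Prop :=
  ∃ occ, parkAux n f [] (List.ofFn s) = some occ ∧ v ∉ occ

theorem ParkingLeavesFree.comp {σ : Fin n → Fin N} (hσ : σ.Injective)
    (hfg : ∀ v, f v = v ∨ g (σ v) = σ (f v)) (h : ParkingLeavesFree f s v) :
    ParkingLeavesFree g (σ ∘ s) (σ v) := by
  obtain ⟨occ, hpark, hv⟩ := h
  refine ⟨occ.map σ, ?_, by rwa [List.mem_map_of_injective hσ]⟩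
  simpa [List.map_ofFn] using parkAux_map hσ hfg hpark

theorem ParkingSucceeds.leavesFree_of_notMem_range {σ : Fin n → Fin N} (hσ : σ.Injective)
    (hfg : ∀ v, f v = v ∨ g (σ v) = σ (f v)) (h : ParkingSucceeds f s) {w : Fin N}
    (hw : w ∉ Set.range σ) : ParkingLeavesFree g (σ ∘ s) w := by
  obtain ⟨occ, hpark⟩ := Option.isSome_iff_exists.1 h
  refine ⟨occ.map σ, by simpa [List.map_ofFn] using parkAux_map hσ hfg hpark, fun hmem => hw ?_⟩
  obtain ⟨v, -, hv⟩ := List.mem_map.1 hmem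
  exact ⟨v, hv⟩

open Classical in
theorem card_parkingLeavesFree_le (f : Fin n → Fin n) (s : Fin m → Fin n) :
    #{v | ParkingLeavesFree f s v} ≤ n - m := by
  rcases eq_empty_or_nonempty {v | ParkingLeavesFree f s v} with hempty | ⟨w, hw⟩
  · simp [hempty]
  obtain ⟨occ, hpark, -⟩ := (mem_filter.1 hw).2
  have card_occ : #occ.toFinset = m := by
    rw [List.toFinset_card_of_nodup (nodup_of_parkAux_eq_some hpark List.nodup_nil),
      length_of_parkAux_eq_some hpark]
    simp
  have hfree : ({v | ParkingLeavesFree f s v} : Finset (Fin n)) = occ.toFinsetᶜ := by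
    ext v
    simp [ParkingLeavesFree, hpark]
  rw [hfree, card_compl, card_occ, Fintype.card_fin]

open Classical in
theorem card_parkingLeavesFree_add_one_eq [NeZero N] (v w : Fin N) :
    #{s : Fin m → Fin N | ParkingLeavesFree (· + 1) s v} =
      #{s : Fin m → Fin N | ParkingLeavesFree (· + 1) s w} := by
  have card_le (v w : Fin N) : #{s : Fin m → Fin N | ParkingLeavesFree (· + 1) s v} ≤
      #{s : Fin m → Fin N | ParkingLeavesFree (· + 1) s w} := by
    refine card_le_card_of_injOn (fun s => (· + (w - v)) ∘ s) (fun s hs => ?_)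
      ((add_left_injective (w - v)).comp_left.injOn)
    simp only [coe_filter, mem_univ, true_and, Set.mem_ofPred_eq] at hs ⊢
    simpa using hs.comp (g := (· + 1)) (add_left_injective (w - v))
      fun u => .inr (add_right_comm u (w - v) 1)
  exact (card_le v w).antisymm (card_le w v)

open Classical in
theorem mul_card_parkingLeavesFree_add_one_le [NeZero N] (v : Fin N) :
    N * #{s : Fin m → Fin N | ParkingLeavesFree (· + 1) s v} ≤ N ^ m * (N - m) := by
  simpa using card_mul_le_card_mul (s := (univ : Finset (Fin N)))
    (t := (univ : Finset (Fin m → Fin N))) (fun w s => ParkingLeavesFree (· + 1) s w)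
    (fun w _ => (card_parkingLeavesFree_add_one_eq v w).le)
    (fun s _ => card_parkingLeavesFree_le (· + 1) s)

open Classical in
theorem card_parkingSucceeds_le_of_eq_or_eq_add_one (hf : ∀ v, f v = v ∨ (f v : ℕ) = v + 1) :
    #{s : Fin m → Fin n | ParkingSucceeds f s} ≤
      #{t : Fin m → Fin (n + 1) | ParkingLeavesFree (· + 1) t (Fin.last n)} := by
  have castSucc_step (v : Fin n) : f v = v ∨ v.castSucc + 1 = (f v).castSucc :=
    (hf v).imp_right fun h => by
      rw [Fin.coeSucc_eq_succ]
      exact Fin.ext (by simp [h])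
  refine card_le_card_of_injOn (Fin.castSucc ∘ ·) (fun s hs => ?_)
    (Fin.castSucc_injective n).comp_left.injOn
  simp only [coe_filter, mem_univ, true_and, Set.mem_ofPred_eq] at hs ⊢
  exact hs.leavesFree_of_notMem_range (Fin.castSucc_injective n) castSucc_step (by simp)

theorem LabelledRootedTree.STree_le_of_parent_eq_or_eq_add_one (T : LabelledRootedTree n)
    (hT : ∀ v, T.parent v = v ∨ (T.parent v : ℕ) = v + 1) :
    STree T m ≤ (n - m + 1) * (n + 1) ^ (m - 1) := by
  classical
  have hcircular : (n + 1) * STree T m ≤ (n + 1) ^ m * (n + 1 - m) := by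
    rw [T.STree_eq_card]
    exact (Nat.mul_le_mul_left _ (card_parkingSucceeds_le_of_eq_or_eq_add_one hT)).trans
      (mul_card_parkingLeavesFree_add_one_le _)
  refine Nat.le_of_mul_le_mul_left (hcircular.trans ?_) n.succ_pos
  calc (n + 1) ^ m * (n + 1 - m) ≤ (n + 1) ^ (m - 1 + 1) * (n - m + 1) :=
        Nat.mul_le_mul (Nat.pow_le_pow_right n.succ_pos (by lia)) (by lia)
    _ = (n + 1) * ((n - m + 1) * (n + 1) ^ (m - 1)) := by ring

end CircularParking

/-- (Lackner–Panholzer, Theorem 2.6) Let `star` be the rooted labelled tree on `{1,…,n}`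
with root `n` and all other vertices attached to the root, and `chain` the rooted
labelled tree with root `n` and vertex `j` attached to `j+1` (here 0-indexed on
`Fin n`, so the root has index `n-1`).  Then for every rooted labelled tree `T` on
`{1,…,n}` and `0 ≤ m ≤ n`,
`S(star,m) ≤ S(T,m) ≤ S(chain,m)`, and
`n(n-1)⋯(n-m+1) + C(m,2)(n-1)(n-2)⋯(n-m+1) ≤ S(T,m) ≤ (n-m+1)(n+1)^(m-1)`
(falling factorials). -/
theorem lackner_panholzer_theorem_2_6 (n m : ℕ) (hn : 1 ≤ n) (hm : m ≤ n)
    (star chain T : LabelledRootedTree n)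
    (hstar_root : (star.root : ℕ) = n - 1)
    (hstar_parent : ∀ v : Fin n, star.parent v = star.root)
    (hchain_root : (chain.root : ℕ) = n - 1)
    (hchain_parent : ∀ v : Fin n, (v : ℕ) + 1 < n → ((chain.parent v) : ℕ) = (v : ℕ) + 1) :
    (STree star m ≤ STree T m ∧ STree T m ≤ STree chain m) ∧
    Nat.descFactorial n m + Nat.choose m 2 * Nat.descFactorial (n - 1) (m - 1) ≤ STree T m ∧
    STree T m ≤ (n - m + 1) * (n + 1) ^ (m - 1) := by
  have hchain_step (v : Fin n) : chain.parent v = v ∨ (chain.parent v : ℕ) = v + 1 := by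
    by_cases hv : (v : ℕ) + 1 < n
    · exact .inr (hchain_parent v hv)
    · have hv_root : v = chain.root := Fin.ext (by lia)
      exact .inl (hv_root ▸ chain.parent_root)
  have hT_le_chain : STree T m ≤ STree chain m :=
    STree_le_STree_of_parent_eq_add_one hchain_parent
  exact ⟨⟨STree_le_STree_of_parent_eq_root hstar_parent, hT_le_chain⟩,
    T.descFactorial_add_choose_mul_le_STree,
    hT_le_chain.trans (chain.STree_le_of_parent_eq_or_eq_add_one hchain_step)⟩
end
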